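/- arXiv:2405.04617 — 4 statements merged into one kernel-verified Lean document; each statement's English description precedes it below -/
import Mathlib

section
/- Let μ and ω be positive integers, let G be a finite simple graph with clique number at most ω, let (T, β) be a tree decomposition of G with μ(T, β) ≤ μ, let x be a node of T, and let D ⊆ β(x). Suppose that for each d ∈ D there is a vertex v_d ∈ V(G) \ D adjacent to d with N(v_d) ∩ D = {d}. Then |D| < R(ω+1, ω+1, μ+1). -/
open SimpleGraph

/-- A tree decomposition of a (finite, simple) graph `G`: a finite tree `T` together with
bags `bag x ⊆ V` such that every vertex is in a bag, every edge is inside some bag, and for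
every vertex the set of nodes whose bag contains it induces a connected subtree of `T`. -/
structure TreeDecomp {V : Type} (G : SimpleGraph V) where
  ι : Type
  fintype_ι : Fintype ι
  T : SimpleGraph ι
  isTree : T.IsTree
  bag : ι → Set V
  mem_bag : ∀ v : V, ∃ x : ι, v ∈ bag x
  edge_bag : ∀ ⦃u v : V⦄, G.Adj u v → ∃ x : ι, u ∈ bag x ∧ v ∈ bag x
  bag_conn : ∀ v : V, (T.induce {x : ι | v ∈ bag x}).Connected

/-- `a`, `b` enumerate the endpoints of an induced matching of size `n` in `G`:
the edges `a i — b i` are present, and endpoints of distinct edges are pairwise distinct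
and non-adjacent. -/
def IsIndMatching {V : Type} (G : SimpleGraph V) {n : ℕ} (a b : Fin n → V) : Prop :=
  (∀ i, G.Adj (a i) (b i)) ∧
  ∀ i j : Fin n, i ≠ j →
    a i ≠ a j ∧ a i ≠ b j ∧ b i ≠ a j ∧ b i ≠ b j ∧
    ¬ G.Adj (a i) (a j) ∧ ¬ G.Adj (a i) (b j) ∧ ¬ G.Adj (b i) (a j) ∧ ¬ G.Adj (b i) (b j)

/-- `μ(T,β) ≤ μ`: every induced matching touching a bag of the decomposition has size at
most `μ`. -/
def TreeDecomp.MuLE {V : Type} {G : SimpleGraph V} (td : TreeDecomp G) (μ : ℕ) : Prop :=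
  ∀ (x : td.ι) (n : ℕ) (a b : Fin n → V),
    IsIndMatching G a b → (∀ i, a i ∈ td.bag x ∨ b i ∈ td.bag x) → n ≤ μ

/-- `α(T,β) ≤ k`: every independent set contained in a single bag has size at most `k`. -/
def TreeDecomp.AlphaLE {V : Type} {G : SimpleGraph V} (td : TreeDecomp G) (k : ℕ) : Prop :=
  ∀ (x : td.ι) (I : Finset V), ↑I ⊆ td.bag x →
    ((I : Set V)).Pairwise (fun u v => ¬ G.Adj u v) → I.card ≤ k

/-- The induced matching treewidth `tree-μ(G)`: the least `n` admitting a tree decomposition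
with `μ(T,β) ≤ n`. -/
noncomputable def treeMu {V : Type} (G : SimpleGraph V) : ℕ :=
  sInf {n | ∃ td : TreeDecomp G, td.MuLE n}

/-- The tree-independence number `tree-α(G)`: the least `n` admitting a tree decomposition
with `α(T,β) ≤ n`. -/
noncomputable def treeAlpha {V : Type} (G : SimpleGraph V) : ℕ :=
  sInf {n | ∃ td : TreeDecomp G, td.AlphaLE n}

/-- `n` is large enough for the multicolour Ramsey property with target sizes `t`:
every `k`-colouring of the edges of the complete graph on `n` vertices admits, for some
colour `i`, a set of `t i` vertices all of whose connecting edges have colour `i`. -/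
def RamseyProp (n : ℕ) {k : ℕ} (t : Fin k → ℕ) : Prop :=
  ∀ c : Sym2 (Fin n) → Fin k, ∃ (i : Fin k) (m : Finset (Fin n)),
    m.card = t i ∧ ∀ x ∈ m, ∀ y ∈ m, x ≠ y → c s(x, y) = i

/-- The three-colour Ramsey number `R(t₁, t₂, t₃)`. -/
noncomputable def ramsey3 (t₁ t₂ t₃ : ℕ) : ℕ := sInf {n | RamseyProp n ![t₁, t₂, t₃]}

theorem ramsey_aux {k : ℕ} (n : ℕ) : ∀ t : Fin k → ℕ, ∑ i, t i = n → ∃ N : ℕ,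
    ∀ (α : Type) (S : Finset α) (c : Sym2 α → Fin k), N < S.card →
      ∃ (i : Fin k) (m : Finset α), m ⊆ S ∧ m.card = t i ∧
        ∀ x ∈ m, ∀ y ∈ m, x ≠ y → c s(x, y) = i := by
  classical
  induction n with
  | zero =>
    intro t ht
    refine ⟨0, fun α S c hS => ?_⟩
    obtain ⟨v, _⟩ := Finset.card_pos.mp hS
    refine ⟨c s(v, v), ∅, by simp, ?_, by simp⟩
    have := (Finset.sum_eq_zero_iff.mp ht) (c s(v, v)) (Finset.mem_univ _)
    simp [this]
  | succ n ih =>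
    intro t ht
    by_cases h0 : ∃ i, t i = 0
    · obtain ⟨i, hi⟩ := h0
      exact ⟨0, fun α S c hS => ⟨i, ∅, by simp, by simp [hi], by simp⟩⟩
    push Not at h0
    have key : ∀ i, ∑ j, Function.update t i (t i - 1) j = n := by
      intro i
      rw [Finset.sum_update_of_mem (Finset.mem_univ i)]
      have := Finset.add_sum_erase Finset.univ t (Finset.mem_univ i)
      rw [Finset.sdiff_singleton_eq_erase]
      have := h0 i
      omega
    choose N hN using fun i => ih _ (key i)
    refine ⟨∑ i, (N i + 1), fun α S c hS => ?_⟩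
    obtain ⟨v, hv⟩ := Finset.card_pos.mp (lt_of_le_of_lt (Nat.zero_le _) hS)
    have hp : ∃ i, N i < ((S.erase v).filter (fun w => c s(v, w) = i)).card := by
      by_contra hcon
      push Not at hcon
      have h1 := Finset.card_eq_sum_card_fiberwise (s := S.erase v) (t := Finset.univ)
        (f := fun w => c s(v, w)) (by intro _ _; simp)
      have h2 : (∑ i, ((S.erase v).filter (fun w => c s(v, w) = i)).card) ≤ ∑ i, N i :=
        Finset.sum_le_sum fun i _ => hcon i
      have h3 := Finset.card_erase_of_mem hv
      rw [Finset.sum_add_distrib] at hS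
      have h4 : 0 < k := (c s(v, v)).pos
      simp at hS
      omega
    obtain ⟨i, hi⟩ := hp
    obtain ⟨j, m, hmS, hmc, hm⟩ := hN i α _ c hi
    have hsub : ∀ w ∈ m, w ≠ v ∧ w ∈ S ∧ c s(v, w) = i := by
      intro w hw
      have := hmS hw
      simp at this
      tauto
    by_cases hji : j = i
    · subst hji
      refine ⟨j, insert v m, ?_, ?_, ?_⟩
      · intro w hw
        rcases Finset.mem_insert.mp hw with rfl | hw
        · exact hv
        · exact (hsub w hw).2.1
      · rw [Finset.card_insert_of_notMem (fun h => (hsub v h).1 rfl), hmc]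
        have := h0 j
        simp
        omega
      · intro x hx y hy hxy
        rcases Finset.mem_insert.mp hx with rfl | hx2 <;>
          rcases Finset.mem_insert.mp hy with rfl | hy2
        · exact absurd rfl hxy
        · exact (hsub y hy2).2.2
        · rw [Sym2.eq_swap]; exact (hsub x hx2).2.2
        · exact hm x hx2 y hy2 hxy
    · refine ⟨j, m, fun w hw => (hsub w hw).2.1, ?_, hm⟩
      simpa [hji] using hmc

theorem ramsey3_spec (a b c : ℕ) : RamseyProp (ramsey3 a b c) ![a, b, c] := by
  apply Nat.sInf_mem (s := {n | RamseyProp n ![a, b, c]})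
  obtain ⟨N, hN⟩ := ramsey_aux _ ![a, b, c] rfl
  refine ⟨N + 1, fun col => ?_⟩
  obtain ⟨i, m, _, h⟩ := hN (Fin (N + 1)) Finset.univ col (by simp)
  exact ⟨i, m, h⟩

/-- Let `G` be a finite graph with clique number at most `ω`, `(T, β)` a tree decomposition
with `μ(T,β) ≤ μ`, `x` a node, and `D ⊆ β(x)`. If every `d ∈ D` has a private neighbour
`v` outside `D` (i.e. `v` adjacent to `d` with `N(v) ∩ D = {d}`), then
`|D| < R(ω+1, ω+1, μ+1)`. -/
theorem stmt10 (μ ω : ℕ) (hμ : 0 < μ) (hω : 0 < ω) (V : Type) [Fintype V]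
    (G : SimpleGraph V) (hclique : G.CliqueFree (ω + 1))
    (td : TreeDecomp G) (htd : td.MuLE μ)
    (x : td.ι) (D : Finset V) (hD : ↑D ⊆ td.bag x)
    (hpriv : ∀ d ∈ D, ∃ v : V, v ∉ D ∧ G.Adj d v ∧ G.neighborSet v ∩ ↑D = {d}) :
    D.card < ramsey3 (ω + 1) (ω + 1) (μ + 1) := by
  classical
  by_contra hcon
  push Not at hcon
  have hR := ramsey3_spec (ω + 1) (ω + 1) (μ + 1)
  generalize ramsey3 (ω + 1) (ω + 1) (μ + 1) = R at hcon hR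
  obtain ⟨f⟩ : Nonempty (Fin R ↪ D) :=
    Function.Embedding.nonempty_of_card_le (by simpa using hcon)
  choose p hp using fun d : D => hpriv d d.2
  have hpD : ∀ d d' : D, G.Adj (p d) d' → d' = d := by
    intro d d' h
    have h1 : (d' : V) ∈ G.neighborSet (p d) ∩ ↑D := ⟨h, d'.2⟩
    rw [(hp d).2.2] at h1
    exact Subtype.ext h1
  have hpinj : ∀ d d' : D, p d = p d' → d = d' := by
    intro d d' h
    exact hpD d' d (h ▸ (hp d).2.1.symm)
  let A : Fin R → V := fun i => f i
  let B : Fin R → V := fun i => p (f i)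
  have hA : Function.Injective A := Subtype.val_injective.comp f.injective
  have hB : Function.Injective B := fun i j h => f.injective (hpinj _ _ h)
  let c : Sym2 (Fin R) → Fin 3 := fun e =>
    if e.map A ∈ G.edgeSet then 0 else if e.map B ∈ G.edgeSet then 1 else 2
  have hc0 : ∀ i j, c s(i, j) = 0 → G.Adj (A i) (A j) := by
    intro i j h
    by_contra hn
    simp only [c, Sym2.map_mk, SimpleGraph.mem_edgeSet, hn, if_false] at h
    split_ifs at h <;> simp at h
  have hc1 : ∀ i j, c s(i, j) = 1 → G.Adj (B i) (B j) := by
    intro i j h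
    by_contra hn
    simp only [c, Sym2.map_mk, SimpleGraph.mem_edgeSet, hn, if_false] at h
    split_ifs at h <;> simp at h
  have hc2 : ∀ i j, c s(i, j) = 2 → ¬ G.Adj (A i) (A j) ∧ ¬ G.Adj (B i) (B j) := by
    intro i j h
    simp only [c, Sym2.map_mk, SimpleGraph.mem_edgeSet] at h
    split_ifs at h with h1 h2
    · simp at h
    · simp at h
    · exact ⟨h1, h2⟩
  obtain ⟨i, m, hm, hmono⟩ := hR c
  have clq : ∀ F : Fin R → V, Function.Injective F → m.card = ω + 1 →
      (∀ x ∈ m, ∀ y ∈ m, x ≠ y → G.Adj (F x) (F y)) → False := by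
    intro F hF hcard h
    apply hclique (m.image F)
    refine ⟨?_, by rw [Finset.card_image_of_injective _ hF, hcard]⟩
    intro u hu w hw huw
    simp only [Finset.coe_image, Set.mem_image, Finset.mem_coe] at hu hw
    obtain ⟨y, hy, rfl⟩ := hu
    obtain ⟨z, hz, rfl⟩ := hw
    exact h y hy z hz (fun e => huw (e ▸ rfl))
  fin_cases i
  · exact clq A hA (by simpa using hm) fun x hx y hy hxy => hc0 _ _ (hmono x hx y hy hxy)
  · exact clq B hB (by simpa using hm) fun x hx y hy hxy => hc1 _ _ (hmono x hx y hy hxy)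
  · have hm' : m.card = μ + 1 := by simpa using hm
    let e := m.orderEmbOfFin hm'
    have he : ∀ i, e i ∈ m := fun i => m.orderEmbOfFin_mem hm' i
    have hAB : ∀ i j, A i ≠ B j := fun i j h => (hp (f j)).1 (by
      have : B j ∈ D := h ▸ (f i).2
      exact this)
    have hABadj : ∀ i j, i ≠ j → ¬ G.Adj (A i) (B j) := fun i j hij h =>
      hij (f.injective (hpD _ _ h.symm))
    have := htd x (μ + 1) (fun i => A (e i)) (fun i => B (e i)) ⟨fun i => (hp (f (e i))).2.1, by
      intro i j hij
      have hne : e i ≠ e j := fun h => hij (e.injective h)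
      have h2 := hc2 _ _ (hmono _ (he i) _ (he j) hne)
      exact ⟨fun h => hne (hA h), hAB _ _, (hAB _ _).symm, fun h => hne (hB h), h2.1,
        hABadj _ _ hne, fun h => hABadj _ _ hne.symm h.symm, h2.2⟩⟩
      (fun i => Or.inl (hD (f (e i)).2))
    omega
end

section
/- Let μ ≥ 1 be an integer, let G be a finite simple graph, and let (T, β) be a tree decomposition of G with μ(T, β) ≤ μ. Let L' ⊆ V(G) be a set such that G[L'] is connected and contains at least one edge, let T' be the subtree of T induced by the nodes whose bags intersect L', and let A ⊆ V(G) be a set such that no vertex of A belongs to L' or has a neighbor in L', and such that for every v ∈ A the subtree T_v shares a node with T'. Then the induced matching treewidth of G[A] is at most μ − 1. -/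
open SimpleGraph

theorem aux_path_mem {ι : Type} {T : SimpleGraph ι} (hT : T.IsTree) {S : Set ι}
    (hS : (T.induce S).Preconnected) {a b : ι} (ha : a ∈ S) (hb : b ∈ S)
    (p : T.Walk a b) (hp : p.IsPath) : ∀ x ∈ p.support, x ∈ S := by
  classical
  obtain ⟨w⟩ := hS ⟨a, ha⟩ ⟨b, hb⟩
  have h1 : (w.bypass.map (Embedding.induce (G := T) S).toHom).IsPath :=
    Walk.map_isPath_of_injective (Subtype.val_injective) w.bypass_isPath
  have h2 : (⟨p, hp⟩ : T.Path a b) = ⟨_, h1⟩ := hT.isAcyclic.path_unique _ _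
  have h3 : p = w.bypass.map (Embedding.induce (G := T) S).toHom := congrArg Subtype.val h2
  intro x hx
  rw [h3] at hx
  have hs := Walk.support_map (Embedding.induce (G := T) S).toHom w.bypass
  have hx' := List.mem_map.1 (hs ▸ hx :
    x ∈ w.bypass.support.map (Embedding.induce (G := T) S).toHom)
  obtain ⟨y, _, rfl⟩ := hx'
  exact y.2

theorem aux_inter {ι : Type} {T : SimpleGraph ι} (hT : T.IsTree) {S R : Set ι}
    (hS : (T.induce S).Preconnected) (hR : (T.induce R).Preconnected) :
    (T.induce (S ∩ R)).Preconnected := by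
  classical
  rintro ⟨a, ha⟩ ⟨b, hb⟩
  obtain ⟨p⟩ := hT.connected.preconnected a b
  exact ⟨p.bypass.induce (S ∩ R) fun x hx =>
    ⟨aux_path_mem hT hS ha.1 hb.1 _ p.bypass_isPath x hx,
     aux_path_mem hT hR ha.2 hb.2 _ p.bypass_isPath x hx⟩⟩

theorem aux_cross {ι : Type} {T : SimpleGraph ι} (hT : T.IsTree) {S R : Set ι}
    (hS : (T.induce S).Preconnected) (hR : (T.induce R).Preconnected)
    {c x y : ι} (hc : c ∈ S) (hc' : c ∈ R) (hx : x ∈ S) (hy : y ∈ R) (h : T.Adj x y) :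
    x ∈ R ∨ y ∈ S := by
  classical
  obtain ⟨p⟩ := hT.connected.preconnected x c
  by_cases hm : y ∈ p.bypass.support
  · exact Or.inr (aux_path_mem hT hS hx hc _ p.bypass_isPath y hm)
  · left
    have hq : (Walk.cons h.symm p.bypass).IsPath := p.bypass_isPath.cons hm
    exact aux_path_mem hT hR hy hc' _ hq x (by simp)

theorem aux_walk {ι : Type} {T : SimpleGraph ι} (hT : T.IsTree) {S R : Set ι}
    (hS : (T.induce S).Preconnected) (hR : (T.induce R).Preconnected)
    {c : ι} (hc : c ∈ S) (hc' : c ∈ R) {a b : ι} (p : T.Walk a b) :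
    a ∈ S → b ∈ R → (∀ x ∈ p.support, x ∈ S ∨ x ∈ R) → ∃ x ∈ p.support, x ∈ S ∧ x ∈ R := by
  induction p with
  | nil => intro ha hb _; exact ⟨_, by simp, ha, hb⟩
  | @cons a a' b h p ih =>
    intro ha hb hcov
    have key : a' ∈ S → ∃ x ∈ (Walk.cons h p).support, x ∈ S ∧ x ∈ R := by
      intro ha'
      obtain ⟨x, hx, hx'⟩ := ih ha' hb fun x hx => hcov x (by simp [hx])
      exact ⟨x, by simp [hx], hx'⟩
    rcases hcov a' (by simp) with ha' | ha'
    · exact key ha'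
    · rcases aux_cross hT hS hR hc hc' ha ha' h with h1 | h1
      · exact ⟨a, by simp, ha, h1⟩
      · exact key h1

theorem aux_helly {ι : Type} {T : SimpleGraph ι} (hT : T.IsTree) {S Q R : Set ι}
    (hS : (T.induce S).Preconnected) (hQ : (T.induce Q).Preconnected)
    (hR : (T.induce R).Preconnected) {a b c : ι} (haS : a ∈ S) (haQ : a ∈ Q)
    (hbQ : b ∈ Q) (hbR : b ∈ R) (hcS : c ∈ S) (hcR : c ∈ R) :
    ∃ x, x ∈ S ∧ x ∈ Q ∧ x ∈ R := by
  classical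
  obtain ⟨q⟩ := hT.connected.preconnected a c
  obtain ⟨r⟩ := hT.connected.preconnected c b
  have hp := (q.bypass.append r.bypass).bypass_isPath
  obtain ⟨x, hx, hxS, hxR⟩ := aux_walk hT hS hR hcS hcR
    (q.bypass.append r.bypass).bypass haS hbR (by
      intro x hx
      have hx := Walk.support_bypass_subset_support _ hx
      rw [Walk.mem_support_append_iff] at hx
      exact hx.imp (aux_path_mem hT hS haS hcS _ q.bypass_isPath x)
        (aux_path_mem hT hR hcR hbR _ r.bypass_isPath x))
  exact ⟨x, hxS, aux_path_mem hT hQ haQ hbQ _ hp x hx, hxR⟩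

theorem aux_union {V : Type} {G : SimpleGraph V} (td : TreeDecomp G) (L : Set V)
    (hL : (G.induce L).Preconnected) :
    (td.T.induce {x | (td.bag x ∩ L).Nonempty}).Preconnected := by
  have same : ∀ (w : V) (_ : w ∈ L) (x y : {x | (td.bag x ∩ L).Nonempty}),
      w ∈ td.bag x → w ∈ td.bag y →
      (td.T.induce {x | (td.bag x ∩ L).Nonempty}).Reachable x y := by
    intro w hw x y hx hy
    have h := (td.bag_conn w).preconnected ⟨x, hx⟩ ⟨y, hy⟩
    let f : td.T.induce {x | w ∈ td.bag x} →g td.T.induce {x | (td.bag x ∩ L).Nonempty} :=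
      ⟨fun z => ⟨z.1, ⟨w, z.2, hw⟩⟩, fun h => h⟩
    exact h.map f
  have walk : ∀ (w w' : L) (_ : (G.induce L).Walk w w')
      (x y : {x | (td.bag x ∩ L).Nonempty}),
      w.1 ∈ td.bag x → w'.1 ∈ td.bag y →
      (td.T.induce {x | (td.bag x ∩ L).Nonempty}).Reachable x y := by
    intro w w' p
    induction p with
    | nil => intro x y hx hy; exact same _ (Subtype.property _) x y hx hy
    | @cons u v w h p ih =>
      intro x y hx hy
      obtain ⟨z, hz, hz'⟩ := td.edge_bag (show G.Adj u.1 v.1 from h)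
      have hzm : z ∈ {x | (td.bag x ∩ L).Nonempty} := ⟨u.1, hz, u.2⟩
      exact (same u.1 u.2 x ⟨z, hzm⟩ hx hz).trans (ih ⟨z, hzm⟩ y hz' hy)
  rintro ⟨x, w, hx, hw⟩ ⟨y, w', hy, hw'⟩
  obtain ⟨p⟩ := hL ⟨w, hw⟩ ⟨w', hw'⟩
  exact walk _ _ p _ _ hx hy

/-- Let `(T, β)` be a tree decomposition of a finite graph `G` with `μ(T,β) ≤ μ` (`μ ≥ 1`),
let `L'` induce a connected subgraph of `G` containing at least one edge, and let
`A ⊆ V(G)` be a set of vertices that are not in `L'` and have no neighbour in `L'`, such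
that for every `v ∈ A` the subtree `T_v` shares a node with the subtree `T'` of `T` induced
by the nodes whose bags intersect `L'`. Then `tree-μ(G[A]) ≤ μ - 1`. -/
theorem stmt11 (μ : ℕ) (hμ : 1 ≤ μ) (V : Type) [Fintype V] (G : SimpleGraph V)
    (td : TreeDecomp G) (htd : td.MuLE μ)
    (L' : Set V) (hconn : (G.induce L').Connected)
    (hedge : ∃ u v, u ∈ L' ∧ v ∈ L' ∧ G.Adj u v)
    (A : Set V)
    (hA : ∀ v ∈ A, v ∉ L' ∧ ∀ u ∈ L', ¬ G.Adj v u)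
    (hshare : ∀ v ∈ A, ∃ x : td.ι, v ∈ td.bag x ∧ (td.bag x ∩ L').Nonempty) :
    treeMu (G.induce A) ≤ μ - 1 := by
  classical
  obtain ⟨u₀, v₀, hu₀, hv₀, huv⟩ := hedge
  have hP := aux_union td L' hconn.preconnected
  set P : Set td.ι := {x | (td.bag x ∩ L').Nonempty} with hPdef
  have hnbr : ∀ w ∈ L', ∃ w' ∈ L', G.Adj w w' := by
    intro w hw
    by_cases h : w = u₀
    · exact ⟨v₀, hv₀, h ▸ huv⟩
    · obtain ⟨p⟩ := hconn.preconnected ⟨w, hw⟩ ⟨u₀, hu₀⟩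
      cases p with
      | nil => exact absurd rfl h
      | @cons _ v _ h' p => exact ⟨v.1, v.2, h'⟩
  have hne : Nonempty P := by
    obtain ⟨x, hx⟩ := td.mem_bag u₀
    exact ⟨⟨x, ⟨u₀, hx, hu₀⟩⟩⟩
  haveI := td.fintype_ι
  let td' : TreeDecomp (G.induce A) :=
    { ι := P
      fintype_ι := inferInstance
      T := td.T.induce P
      isTree := ⟨⟨hP⟩, td.isTree.isAcyclic.induce P⟩
      bag := fun x => {v | v.1 ∈ td.bag x.1}
      mem_bag := by
        rintro ⟨v, hv⟩
        obtain ⟨x, hx, hx'⟩ := hshare v hv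
        exact ⟨⟨x, hx'⟩, hx⟩
      edge_bag := by
        rintro ⟨u, hu⟩ ⟨v, hv⟩ h
        obtain ⟨a, ha, ha'⟩ := td.edge_bag (show G.Adj u v from h)
        obtain ⟨b, hb, hb'⟩ := hshare v hv
        obtain ⟨c, hc, hc'⟩ := hshare u hu
        obtain ⟨x, h1, h2, h3⟩ := aux_helly td.isTree (td.bag_conn u).preconnected
          (td.bag_conn v).preconnected hP (a := a) (b := b) (c := c) ha ha' hb hb' hc hc'
        exact ⟨⟨x, h3⟩, h1, h2⟩
      bag_conn := by
        rintro ⟨v, hv⟩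
        obtain ⟨x, hx, hx'⟩ := hshare v hv
        haveI : Nonempty {x : P | v ∈ td.bag x.1} := ⟨⟨⟨x, hx'⟩, hx⟩⟩
        refine @Connected.mk _ _ ?_ this
        have h := aux_inter td.isTree hP (td.bag_conn v).preconnected
        let f : td.T.induce (P ∩ {x | v ∈ td.bag x}) →g
            (td.T.induce P).induce {x : P | v ∈ td.bag x.1} :=
          ⟨fun z => ⟨⟨z.1, z.2.1⟩, z.2.2⟩, fun h => h⟩
        rintro ⟨⟨a, ha⟩, ha'⟩ ⟨⟨b, hb⟩, hb'⟩
        exact (h ⟨a, ha, ha'⟩ ⟨b, hb, hb'⟩).map f }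
  refine Nat.sInf_le ⟨td', ?_⟩
  rintro ⟨x, w, hwx, hw⟩ n a b ⟨hab, hind⟩ htouch
  obtain ⟨w', hw', hww'⟩ := hnbr w hw
  have key : ∀ z : A, ∀ u ∈ L', z.1 ≠ u ∧ u ≠ z.1 ∧ ¬ G.Adj z.1 u ∧ ¬ G.Adj u z.1 := by
    intro z u hu
    obtain ⟨h1, h2⟩ := hA z.1 z.2
    exact ⟨fun h => h1 (h ▸ hu), fun h => h1 (h ▸ hu), h2 u hu, fun h => h2 u hu h.symm⟩
  have := htd x (n + 1) (Fin.cons w fun i => (a i).1) (Fin.cons w' fun i => (b i).1) (by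
    constructor
    · intro i
      refine Fin.cases ?_ (fun i => ?_) i
      · simpa using hww'
      · simpa using hab i
    · intro i j
      refine Fin.cases ?_ (fun i => ?_) i <;> refine Fin.cases ?_ (fun j => ?_) j
      · intro h; exact absurd rfl h
      · intro _
        have h1 := key (a j) w hw
        have h2 := key (b j) w hw
        have h3 := key (a j) w' hw'
        have h4 := key (b j) w' hw'
        simp only [Fin.cons_zero, Fin.cons_succ]
        tauto
      · intro _
        have h1 := key (a i) w hw
        have h2 := key (b i) w hw
        have h3 := key (a i) w' hw'
        have h4 := key (b i) w' hw'
        simp only [Fin.cons_zero, Fin.cons_succ]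
        tauto
      · intro h
        have := hind i j fun h' => h (h' ▸ rfl)
        simpa [Subtype.ext_iff] using this) (by
    intro i
    refine Fin.cases ?_ (fun i => ?_) i
    · left; simpa using hwx
    · exact htouch i)
  omega
end

section
/- For every positive integer s, every proper subdivision of K_{s,s} (a graph obtained from the complete bipartite graph K_{s,s} by replacing each edge with a path containing at least one internal vertex, with distinct edges replaced by internally vertex-disjoint paths) has induced matching treewidth at least s. -/
open SimpleGraph

/-- Index type for the vertices of a subdivision of `K_{s,s}` in which the edge `ij` is
replaced by a path with `len i j` internal vertices: the two sides of branch vertices,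
plus the internal path vertices. -/
def SubdivIdx (s : ℕ) (len : Fin s → Fin s → ℕ) : Type :=
  (Fin s ⊕ Fin s) ⊕ ((i : Fin s) × (j : Fin s) × Fin (len i j))

/-- Adjacency of the subdivision of `K_{s,s}`: each branch vertex `a i` (resp. `b j`) is
joined to the first (resp. last) internal vertex of the path replacing the edge `ij`, and
consecutive internal vertices of a path are joined. -/
def SubdivAdj (s : ℕ) (len : Fin s → Fin s → ℕ) :
    SubdivIdx s len → SubdivIdx s len → Prop := fun x y =>
  (∃ (i j : Fin s) (k : Fin (len i j)),
      x = Sum.inl (Sum.inl i) ∧ y = Sum.inr ⟨i, j, k⟩ ∧ (k : ℕ) = 0) ∨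
  (∃ (i j : Fin s) (k : Fin (len i j)),
      x = Sum.inr ⟨i, j, k⟩ ∧ y = Sum.inl (Sum.inl i) ∧ (k : ℕ) = 0) ∨
  (∃ (i j : Fin s) (k : Fin (len i j)),
      x = Sum.inl (Sum.inr j) ∧ y = Sum.inr ⟨i, j, k⟩ ∧ (k : ℕ) = len i j - 1) ∨
  (∃ (i j : Fin s) (k : Fin (len i j)),
      x = Sum.inr ⟨i, j, k⟩ ∧ y = Sum.inl (Sum.inr j) ∧ (k : ℕ) = len i j - 1) ∨
  (∃ (i j : Fin s) (k k' : Fin (len i j)),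
      x = Sum.inr ⟨i, j, k⟩ ∧ y = Sum.inr ⟨i, j, k'⟩ ∧
      ((k : ℕ) + 1 = (k' : ℕ) ∨ (k' : ℕ) + 1 = (k : ℕ)))

/-- `H` is a proper subdivision of `K_{s,s}`: every edge of `K_{s,s}` is replaced by a path
with at least one internal vertex, distinct edges being replaced by internally disjoint
paths. -/
def IsProperSubdivKss (s : ℕ) {W : Type} (H : SimpleGraph W) : Prop :=
  ∃ (len : Fin s → Fin s → ℕ) (φ : SubdivIdx s len → W),
    (∀ i j, 1 ≤ len i j) ∧ Function.Bijective φ ∧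
    ∀ x y : SubdivIdx s len, H.Adj (φ x) (φ y) ↔ SubdivAdj s len x y


/-- Joined by a walk inside `S`. -/
def WJ {ι : Type} (T : SimpleGraph ι) (S : Set ι) (x y : ι) : Prop :=
  ∃ p : T.Walk x y, ∀ z ∈ p.support, z ∈ S

lemma WJ.symm {ι : Type} {T : SimpleGraph ι} {S : Set ι} {x y : ι} (h : WJ T S x y) :
    WJ T S y x := by
  obtain ⟨p, hp⟩ := h
  exact ⟨p.reverse, by simpa using hp⟩

lemma WJ.trans {ι : Type} {T : SimpleGraph ι} {S : Set ι} {x y z : ι} (h : WJ T S x y)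
    (h' : WJ T S y z) : WJ T S x z := by
  obtain ⟨p, hp⟩ := h
  obtain ⟨q, hq⟩ := h'
  refine ⟨p.append q, fun w hw => ?_⟩
  rw [Walk.mem_support_append_iff] at hw
  exact hw.elim (hp w) (hq w)

lemma WJ.mono {ι : Type} {T : SimpleGraph ι} {S S' : Set ι} (hS : S ⊆ S') {x y : ι}
    (h : WJ T S x y) : WJ T S' x y := by
  obtain ⟨p, hp⟩ := h
  exact ⟨p, fun z hz => hS (hp z hz)⟩

lemma WJ.of_induce {ι : Type} {T : SimpleGraph ι} {S : Set ι} (h : (T.induce S).Connected)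
    {x y : ι} (hx : x ∈ S) (hy : y ∈ S) : WJ T S x y := by
  obtain ⟨p⟩ := h.preconnected ⟨x, hx⟩ ⟨y, hy⟩
  refine ⟨p.map (Embedding.induce S).toHom, fun z hz => ?_⟩
  have hz' : z ∈ (p.map (Embedding.induce S).toHom).support := hz
  rw [Walk.support_map, List.mem_map] at hz'
  obtain ⟨w, _, rfl⟩ := hz'
  exact w.2

lemma geo {ι : Type} {T : SimpleGraph ι} (hT : T.IsTree) (t r : ι) :
    ∃ q : T.Walk t r, q.IsPath ∧ ∀ w ∈ q.support, T.dist t r ≤ T.dist w r → w = t := by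
  classical
  obtain ⟨q, hq, hl⟩ := hT.connected.exists_path_of_dist t r
  refine ⟨q, hq, fun w hw hd => ?_⟩
  have h1 := congrArg Walk.length (q.take_spec hw)
  rw [Walk.length_append] at h1
  have h2 := dist_le (q.dropUntil w hw)
  exact (Walk.eq_of_length_eq_zero (p := q.takeUntil w hw) (by omega)).symm

lemma thru {ι : Type} {T : SimpleGraph ι} (hT : T.IsTree) (r : ι) (S : Set ι) (t z : ι)
    (hmin : ∀ x ∈ S, T.dist t r ≤ T.dist x r) (h : WJ T S z t) :
    ∃ (p : T.Walk z t) (q : T.Walk t r), (∀ w ∈ p.support, w ∈ S) ∧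
      (∀ w ∈ q.support, T.dist t r ≤ T.dist w r → w = t) ∧ (p.append q).IsPath := by
  classical
  obtain ⟨p, hp⟩ := h
  obtain ⟨q, hq, hq'⟩ := geo hT t r
  refine ⟨p.bypass, q, fun w hw => hp w (p.support_bypass_subset hw), hq', ?_⟩
  rw [Walk.isPath_def, Walk.support_append, List.nodup_append]
  refine ⟨p.bypass_isPath.support_nodup, hq.support_nodup.tail, ?_⟩
  rintro a ha b hb rfl
  have h1 := hq' a (List.mem_of_mem_tail hb) (hmin a (hp a (p.support_bypass_subset ha)))
  subst h1
  have := hq.support_nodup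
  rw [Walk.support_eq_cons] at this
  exact (List.nodup_cons.1 this).1 hb

lemma top_mem {ι : Type} {T : SimpleGraph ι} (hT : T.IsTree) (r : ι) (S S' : Set ι)
    (t t' z : ι) (ht' : t' ∈ S')
    (hmin : ∀ x ∈ S, T.dist t r ≤ T.dist x r) (hmin' : ∀ x ∈ S', T.dist t' r ≤ T.dist x r)
    (h : WJ T S z t) (h' : WJ T S' z t') (hle : T.dist t' r ≤ T.dist t r) : t ∈ S' := by
  obtain ⟨p, q, _, _, hpq⟩ := thru hT r S t z hmin h
  obtain ⟨p', q', hp', hq', hpq'⟩ := thru hT r S' t' z hmin' h'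
  have he : p.append q = p'.append q' := by
    have := hT.IsAcyclic.path_unique ⟨_, hpq⟩ ⟨_, hpq'⟩
    exact congrArg Subtype.val this
  have hm : t ∈ (p.append q).support := by
    rw [Walk.mem_support_append_iff]; left; simp
  rw [he, Walk.mem_support_append_iff] at hm
  rcases hm with hm | hm
  · exact hp' t hm
  · rw [hq' t hm hle]; exact ht'

/-- Cross-intersecting families of subtrees. -/
lemma cross {ι : Type} {T : SimpleGraph ι} (hT : T.IsTree) {s : ℕ} (hs : 0 < s)
    (A B : Fin s → Set ι)
    (hA : ∀ i, ∀ x ∈ A i, ∀ y ∈ A i, WJ T (A i) x y)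
    (hB : ∀ i, ∀ x ∈ B i, ∀ y ∈ B i, WJ T (B i) x y)
    (hAB : ∀ i j, ∃ z, z ∈ A i ∧ z ∈ B j) :
    ∃ t, (∀ i, t ∈ A i) ∨ (∀ j, t ∈ B j) := by
  obtain ⟨r, _⟩ := hAB ⟨0, hs⟩ ⟨0, hs⟩
  have key : ∀ S : Set ι, S.Nonempty → ∃ t ∈ S, ∀ x ∈ S, T.dist t r ≤ T.dist x r := by
    intro S hS
    obtain ⟨t, ht, hm⟩ := (measure (fun x => T.dist x r)).wf.has_min S hS
    exact ⟨t, ht, fun x hx => not_lt.1 (hm x hx)⟩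
  have kA : ∀ i, ∃ t ∈ A i, ∀ x ∈ A i, T.dist t r ≤ T.dist x r := fun i =>
    key _ ⟨_, (hAB i ⟨0, hs⟩).choose_spec.1⟩
  have kB : ∀ i, ∃ t ∈ B i, ∀ x ∈ B i, T.dist t r ≤ T.dist x r := fun i =>
    key _ ⟨_, (hAB ⟨0, hs⟩ i).choose_spec.2⟩
  choose f hf hf' using kA
  choose g hg hg' using kB
  haveI : Nonempty (Fin s) := ⟨⟨0, hs⟩⟩
  obtain ⟨i, hi⟩ := Finite.exists_max (fun i => T.dist (f i) r)
  obtain ⟨j, hj⟩ := Finite.exists_max (fun i => T.dist (g i) r)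
  rcases le_total (T.dist (f i) r) (T.dist (g j) r) with h | h
  · refine ⟨g j, Or.inl fun k => ?_⟩
    obtain ⟨z, hz, hz'⟩ := hAB k j
    exact top_mem hT r (B j) (A k) _ _ z (hf k) (hg' j) (hf' k) (hB j _ hz' _ (hg j))
      (hA k _ hz _ (hf k)) ((hi k).trans h)
  · refine ⟨f i, Or.inr fun k => ?_⟩
    obtain ⟨z, hz, hz'⟩ := hAB i k
    exact top_mem hT r (A i) (B k) _ _ z (hg k) (hf' i) (hg' k) (hA i _ hz _ (hf i))
      (hB k _ hz' _ (hg k)) ((hj k).trans h)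

abbrev sA (s : ℕ) (len : Fin s → Fin s → ℕ) (i : Fin s) : SubdivIdx s len := Sum.inl (Sum.inl i)
abbrev sB (s : ℕ) (len : Fin s → Fin s → ℕ) (i : Fin s) : SubdivIdx s len := Sum.inl (Sum.inr i)
abbrev sP (s : ℕ) (len : Fin s → Fin s → ℕ) (i j : Fin s) (k : Fin (len i j)) :
    SubdivIdx s len := Sum.inr ⟨i, j, k⟩

/-- Which star the vertex belongs to. -/
def own (s : ℕ) (len : Fin s → Fin s → ℕ) : SubdivIdx s len → Option (Fin s)
  | Sum.inl (Sum.inl i) => some i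
  | Sum.inl (Sum.inr _) => none
  | Sum.inr ⟨i, _, _⟩ => some i

lemma own_adj {s : ℕ} {len : Fin s → Fin s → ℕ} {x y : SubdivIdx s len} {i j : Fin s}
    (h : SubdivAdj s len x y) (hx : own s len x = some i) (hy : own s len y = some j) :
    i = j := by
  rcases h with ⟨i, j, k, rfl, rfl, _⟩ | ⟨i, j, k, rfl, rfl, _⟩ | ⟨i, j, k, rfl, rfl, _⟩ |
    ⟨i, j, k, rfl, rfl, _⟩ | ⟨i, j, k, k', rfl, rfl, _⟩ <;> simp [own] at hx hy <;> simp_all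

lemma own_nbr {s : ℕ} {len : Fin s → Fin s → ℕ} (hlen : ∀ i j, 1 ≤ len i j)
    {x : SubdivIdx s len} {i : Fin s} (hx : own s len x = some i) :
    ∃ y, own s len y = some i ∧ SubdivAdj s len x y := by
  rcases x with (a | b) | ⟨a, b, k⟩
  · refine ⟨sP s len a a ⟨0, hlen a a⟩, hx, Or.inl ⟨a, a, _, rfl, rfl, rfl⟩⟩
  · simp [own] at hx
  · rcases Nat.eq_zero_or_pos k.1 with h | h
    · exact ⟨sA s len a, hx, Or.inr (Or.inl ⟨a, b, k, rfl, rfl, h⟩)⟩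
    · refine ⟨sP s len a b ⟨k.1 - 1, by omega⟩, hx,
        Or.inr (Or.inr (Or.inr (Or.inr ⟨a, b, k, _, rfl, rfl, Or.inr ?_⟩)))⟩
      simp only; omega

lemma main_bound (s : ℕ) (hs : 0 < s) (W : Type) (H : SimpleGraph W)
    (len : Fin s → Fin s → ℕ) (φ : SubdivIdx s len → W) (hlen : ∀ i j, 1 ≤ len i j)
    (hφ : Function.Bijective φ)
    (hadj : ∀ x y : SubdivIdx s len, H.Adj (φ x) (φ y) ↔ SubdivAdj s len x y)
    (td : TreeDecomp H) (n : ℕ) (hn : td.MuLE n) : s ≤ n := by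
  let A : Fin s → Set td.ι := fun i => {x | ∃ v, own s len v = some i ∧ φ v ∈ td.bag x}
  let B : Fin s → Set td.ι := fun j => {x | φ (sB s len j) ∈ td.bag x}
  have sub : ∀ i v, own s len v = some i → {x | φ v ∈ td.bag x} ⊆ A i :=
    fun i v hv x hx => ⟨v, hv, hx⟩
  have one : ∀ i v, own s len v = some i → ∀ x y, φ v ∈ td.bag x → φ v ∈ td.bag y →
      WJ td.T (A i) x y := fun i v hv x y hx hy =>
    (WJ.of_induce (td.bag_conn (φ v)) hx hy).mono (sub i v hv)
  have step : ∀ i v w, own s len v = some i → own s len w = some i → SubdivAdj s len v w →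
      ∀ x0, (∀ x, φ v ∈ td.bag x → WJ td.T (A i) x0 x) →
      ∀ x, φ w ∈ td.bag x → WJ td.T (A i) x0 x := by
    intro i v w hv hw hvw x0 h x hx
    obtain ⟨y, hy1, hy2⟩ := td.edge_bag ((hadj v w).2 hvw)
    exact (h y hy1).trans (one i w hw y x hy2 hx)
  have hA : ∀ i, ∀ x ∈ A i, ∀ y ∈ A i, WJ td.T (A i) x y := by
    intro i
    obtain ⟨x0, hx0⟩ := td.mem_bag (φ (sA s len i))
    have base : ∀ x, φ (sA s len i) ∈ td.bag x → WJ td.T (A i) x0 x :=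
      fun x hx => one i _ rfl x0 x hx0 hx
    have path : ∀ j (k : ℕ) (hk : k < len i j), ∀ x, φ (sP s len i j ⟨k, hk⟩) ∈ td.bag x →
        WJ td.T (A i) x0 x := by
      intro j k
      induction k with
      | zero =>
        intro hk
        exact step i _ _ rfl rfl (Or.inl ⟨i, j, _, rfl, rfl, rfl⟩) x0 base
      | succ k ih =>
        intro hk
        exact step i (sP s len i j ⟨k, by omega⟩) _ rfl rfl
          (Or.inr (Or.inr (Or.inr (Or.inr ⟨i, j, _, _, rfl, rfl, Or.inl rfl⟩)))) x0
          (ih (by omega))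
    have all : ∀ x ∈ A i, WJ td.T (A i) x0 x := by
      rintro x ⟨v, hv, hx⟩
      rcases v with (a | b) | ⟨a, b, k⟩
      · simp only [own, Option.some.injEq] at hv
        subst hv
        exact base x hx
      · simp [own] at hv
      · simp only [own, Option.some.injEq] at hv
        subst hv
        exact path b k.1 k.2 x hx
    exact fun x hx y hy => (all x hx).symm.trans (all y hy)
  have hB : ∀ i, ∀ x ∈ B i, ∀ y ∈ B i, WJ td.T (B i) x y := fun i x hx y hy =>
    WJ.of_induce (td.bag_conn _) hx hy
  have last : ∀ i j, SubdivAdj s len (sB s len j)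
      (sP s len i j ⟨len i j - 1, by have := hlen i j; omega⟩) := fun i j =>
    Or.inr (Or.inr (Or.inl ⟨i, j, _, rfl, rfl, rfl⟩))
  have hAB : ∀ i j, ∃ z, z ∈ A i ∧ z ∈ B j := by
    intro i j
    obtain ⟨z, h1, h2⟩ := td.edge_bag ((hadj _ _).2 (last i j))
    exact ⟨z, ⟨_, rfl, h2⟩, h1⟩
  obtain ⟨t, ht | ht⟩ := cross td.isTree hs A B hA hB hAB
  · choose v hv hvt using ht
    choose u hu huv using fun i => own_nbr hlen (hv i)
    have ne : ∀ i j x y, i ≠ j → own s len x = some i → own s len y = some j →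
        φ x ≠ φ y := by
      intro i j x y hij hx hy h
      rw [hφ.1 h, hy] at hx
      exact hij (Option.some.inj hx).symm
    have na : ∀ i j x y, i ≠ j → own s len x = some i → own s len y = some j →
        ¬ H.Adj (φ x) (φ y) := by
      intro i j x y hij hx hy h
      exact hij (own_adj ((hadj _ _).1 h) hx hy)
    refine hn t s (fun i => φ (v i)) (fun i => φ (u i))
      ⟨fun i => (hadj _ _).2 (huv i), fun i j hij => ?_⟩ (fun i => Or.inl (hvt i))
    exact ⟨ne i j _ _ hij (hv i) (hv j), ne i j _ _ hij (hv i) (hu j),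
      ne i j _ _ hij (hu i) (hv j), ne i j _ _ hij (hu i) (hu j),
      na i j _ _ hij (hv i) (hv j), na i j _ _ hij (hv i) (hu j),
      na i j _ _ hij (hu i) (hv j), na i j _ _ hij (hu i) (hu j)⟩
  · have hBP : ∀ i j k, i ≠ j → ¬ SubdivAdj s len (sB s len i) (sP s len j j k) := by
      rintro i j k hij (⟨a, b, k, h1, h2, _⟩ | ⟨a, b, k, h1, h2, _⟩ | ⟨a, b, k, h1, h2, _⟩ |
        ⟨a, b, k, h1, h2, _⟩ | ⟨a, b, k, k', h1, h2, _⟩)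
      · cases h1
      · cases h1
      · cases h1; cases h2; exact hij rfl
      · cases h1
      · cases h1
    have hBB : ∀ i j, ¬ SubdivAdj s len (sB s len i) (sB s len j) := by
      rintro i j (⟨a, b, k, h1, h2, _⟩ | ⟨a, b, k, h1, h2, _⟩ | ⟨a, b, k, h1, h2, _⟩ |
        ⟨a, b, k, h1, h2, _⟩ | ⟨a, b, k, k', h1, h2, _⟩)
      · cases h1
      · cases h1
      · cases h2
      · cases h1
      · cases h1
    refine hn t s (fun i => φ (sB s len i))
      (fun i => φ (sP s len i i ⟨len i i - 1, by have := hlen i i; omega⟩))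
      ⟨fun i => (hadj _ _).2 (last i i), fun i j hij => ?_⟩ (fun i => Or.inl (ht i))
    refine ⟨fun h => ?_, fun h => ?_, fun h => ?_, fun h => ?_, fun h => ?_, fun h => ?_,
      fun h => ?_, fun h => ?_⟩
    · exact hij (Sum.inr.inj (Sum.inl.inj (hφ.1 h)))
    · exact Sum.inl_ne_inr (hφ.1 h)
    · exact Sum.inr_ne_inl (hφ.1 h)
    · exact hij (congrArg Sigma.fst (Sum.inr.inj (hφ.1 h)))
    · exact hBB _ _ ((hadj _ _).1 h)
    · exact hBP _ _ _ hij ((hadj _ _).1 h)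
    · exact hBP _ _ _ hij.symm ((hadj _ _).1 h.symm)
    · exact hij (own_adj ((hadj _ _).1 h) rfl rfl)

/-- The one-bag decomposition. -/
def trivTD {W : Type} (H : SimpleGraph W) : TreeDecomp H where
  ι := Unit
  fintype_ι := inferInstance
  T := ⊥
  isTree := IsTree.of_subsingleton
  bag := fun _ => Set.univ
  mem_bag := fun _ => ⟨(), trivial⟩
  edge_bag := fun _ _ _ => ⟨(), trivial, trivial⟩
  bag_conn := fun v => by
    haveI : Nonempty {x : Unit | v ∈ (Set.univ : Set W)} := ⟨⟨(), trivial⟩⟩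
    exact ⟨fun x y => by rw [Subsingleton.elim x y]⟩

/-- Every proper subdivision of `K_{s,s}` has induced matching treewidth at least `s`. -/
theorem stmt15 (s : ℕ) (hs : 0 < s) (W : Type) [Fintype W] (H : SimpleGraph W)
    (hH : IsProperSubdivKss s H) : s ≤ treeMu H := by
  obtain ⟨len, φ, hlen, hφ, hadj⟩ := hH
  have hne : {n | ∃ td : TreeDecomp H, td.MuLE n}.Nonempty := by
    refine ⟨Fintype.card W, trivTD H, fun x n a b hab _ => ?_⟩
    have hinj : Function.Injective a := by
      intro i j h
      by_contra hij
      exact (hab.2 i j hij).1 h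
    simpa using Fintype.card_le_of_injective a hinj
  obtain ⟨td, htd⟩ := Nat.sInf_mem hne
  exact main_bound s hs W H len φ hlen hφ hadj td _ htd
end

section
/- For all positive integers μ and t, there exists an integer K'(μ,t) such that every finite simple graph G with induced matching treewidth at most μ that contains no K_{t,t} subgraph (not necessarily induced) has treewidth strictly less than K'(μ,t). -/
open SimpleGraph

/-- Width bound for a tree decomposition: every bag has size at most `w + 1`. -/
def TreeDecomp.WidthLE {V : Type} {G : SimpleGraph V} (td : TreeDecomp G) (w : ℕ) : Prop :=
  ∀ x : td.ι, (td.bag x).ncard ≤ w + 1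

/-- The treewidth of a finite graph: the least `w` admitting a tree decomposition all of
whose bags have size at most `w + 1`. -/
noncomputable def treewidth {V : Type} (G : SimpleGraph V) : ℕ :=
  sInf {w | ∃ td : TreeDecomp G, td.WidthLE w}

section Ramsey

lemma ramsey_pre {κ α : Type} [Fintype κ] [Nonempty κ] [LinearOrder α] (c : α → α → κ) (L : ℕ) :
    ∀ S : Finset α, (Fintype.card κ + 1) ^ L ≤ S.card →
      ∃ S' ⊆ S, S'.card = L ∧ ∃ f : α → κ, ∀ i ∈ S', ∀ j ∈ S', i < j → c i j = f i := by
  classical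
  induction L with
  | zero => 
    intro S _
    exact ⟨∅, by simp, by simp, fun _ => Classical.arbitrary κ, by simp⟩
  | succ L ih =>
    intro S hS
    have hq : 0 < (Fintype.card κ + 1) ^ L := by positivity
    rw [pow_succ] at hS
    have hne : S.Nonempty := by
      rw [← Finset.card_pos]; nlinarith
    set m := S.min' hne with hm
    have hmS : m ∈ S := S.min'_mem hne
    have hcard : (S.erase m).card + 1 = S.card := Finset.card_erase_add_one hmS
    obtain ⟨y, -, hy⟩ := Finset.exists_le_card_fiber_of_mul_le_card_of_maps_to
      (s := S.erase m) (t := (Finset.univ : Finset κ)) (f := fun j => c m j)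
      (n := (Fintype.card κ + 1) ^ L) (fun _ _ => Finset.mem_univ _) Finset.univ_nonempty
      (by rw [Finset.card_univ]; nlinarith)
    obtain ⟨S', hS', hc, f, hf⟩ := ih _ hy
    have hlt : ∀ i ∈ S', m < i ∧ c m i = y ∧ i ∈ S := by
      intro i hi
      have := hS' hi
      simp only [Finset.mem_filter, Finset.mem_erase] at this
      exact ⟨lt_of_le_of_ne (S.min'_le _ this.1.2) (Ne.symm this.1.1), this.2, this.1.2⟩
    have hmn : m ∉ S' := fun h => lt_irrefl _ (hlt m h).1
    refine ⟨insert m S', ?_, by rw [Finset.card_insert_of_notMem hmn, hc],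
      Function.update f m y, ?_⟩
    · intro i hi
      rcases Finset.mem_insert.1 hi with rfl | hi
      · exact hmS
      · exact (hlt i hi).2.2
    · intro i hi j hj hij
      rcases Finset.mem_insert.1 hi with rfl | hi
      · rcases Finset.mem_insert.1 hj with rfl | hj
        · exact absurd hij (lt_irrefl _)
        · simp [(hlt j hj).2.1]
      · rcases Finset.mem_insert.1 hj with rfl | hj
        · exact absurd hij (not_lt.2 (hlt i hi).1.le)
        · rw [Function.update_of_ne (hlt i hi).1.ne']
          exact hf i hi j hj hij

lemma ramsey {κ α : Type} [Fintype κ] [Nonempty κ] [LinearOrder α] (c : α → α → κ) (m : ℕ)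
    (S : Finset α) (hS : (Fintype.card κ + 1) ^ (Fintype.card κ * m) ≤ S.card) :
    ∃ S' ⊆ S, S'.card = m ∧ ∃ k : κ, ∀ i ∈ S', ∀ j ∈ S', i < j → c i j = k := by
  classical
  obtain ⟨S', hS', hc, f, hf⟩ := ramsey_pre c _ S hS
  obtain ⟨y, -, hy⟩ := Finset.exists_le_card_fiber_of_mul_le_card_of_maps_to
      (s := S') (t := (Finset.univ : Finset κ)) (f := f)
      (n := m) (fun _ _ => Finset.mem_univ _) Finset.univ_nonempty
      (by rw [Finset.card_univ, hc])
  obtain ⟨S'', hS'', hc''⟩ := Finset.exists_subset_card_eq hy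
  have h2 : ∀ i ∈ S'', i ∈ S' ∧ f i = y := fun i hi => by simpa using hS'' hi
  exact ⟨S'', fun i hi => hS' (h2 i hi).1, hc'', y, fun i hi j hj hij => by
    rw [hf i (h2 i hi).1 j (h2 j hj).1 hij, (h2 i hi).2]⟩

end Ramsey

def HasKtt {V : Type} (G : SimpleGraph V) (t : ℕ) : Prop :=
  ∃ X Y : Finset V, Disjoint X Y ∧ X.card = t ∧ Y.card = t ∧ ∀ x ∈ X, ∀ y ∈ Y, G.Adj x y

lemma hasKtt_of_half {V : Type} (G : SimpleGraph V) (t m : ℕ) (hm : 2 * t ≤ m)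
    (p q : Fin m → V) (hp : Function.Injective p) (hq : Function.Injective q)
    (h : ∀ i j, i < j → G.Adj (p i) (q j)) : HasKtt G t := by
  classical
  let e : Fin t ↪ Fin m := ⟨fun i => ⟨i, by omega⟩, fun i j h => by
    simpa [Fin.ext_iff] using h⟩
  let e' : Fin t ↪ Fin m := ⟨fun i => ⟨t + i, by omega⟩, fun i j h => by
    simpa [Fin.ext_iff] using h⟩
  have hadj : ∀ x ∈ Finset.univ.map (e.trans ⟨p, hp⟩), ∀ y ∈ Finset.univ.map (e'.trans ⟨q, hq⟩),
      G.Adj x y := by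
    intro x hx y hy
    simp only [Finset.mem_map, Finset.mem_univ, true_and] at hx hy
    obtain ⟨i, rfl⟩ := hx
    obtain ⟨j, rfl⟩ := hy
    apply h
    show (i : ℕ) < t + (j : ℕ)
    omega
  refine ⟨_, _, ?_, ?_, ?_, hadj⟩
  · rw [Finset.disjoint_left]
    intro x hx hy
    exact (hadj x hx x hy).ne rfl
  · simp
  · simp

def matchBound (μ t : ℕ) : ℕ :=
  (Fintype.card (Fin 4 → Prop) + 1) ^ (Fintype.card (Fin 4 → Prop) * (2 * t + μ + 1))

lemma induced_of_matching {V : Type} (G : SimpleGraph V) (μ t n : ℕ) (hn : matchBound μ t ≤ n)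
    (hK : ¬ HasKtt G t) (a b : Fin n → V) (hab : ∀ i, G.Adj (a i) (b i))
    (hd : ∀ i j, i ≠ j → a i ≠ a j ∧ a i ≠ b j ∧ b i ≠ a j ∧ b i ≠ b j) :
    ∃ e : Fin (2 * t + μ + 1) → Fin n, IsIndMatching G (a ∘ e) (b ∘ e) := by
  classical
  let c : Fin n → Fin n → (Fin 4 → Prop) := fun i j =>
    ![G.Adj (a i) (a j), G.Adj (a i) (b j), G.Adj (b i) (a j), G.Adj (b i) (b j)]
  obtain ⟨S, -, hS, k, hk⟩ := ramsey c (2 * t + μ + 1) Finset.univ (by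
    simpa [matchBound] using hn)
  let e := S.orderEmbOfFin hS
  have he : ∀ i, e i ∈ S := fun i => S.orderEmbOfFin_mem hS i
  have hc : ∀ i j, i < j → c (e i) (e j) = k := fun i j hij =>
    hk _ (he i) _ (he j) (e.strictMono hij)
  have hai : Function.Injective (a ∘ e) := by
    intro i j hij
    by_contra hne
    exact (hd (e i) (e j) (fun h => hne (e.injective h))).1 hij
  have hbi : Function.Injective (b ∘ e) := by
    intro i j hij
    by_contra hne
    exact (hd (e i) (e j) (fun h => hne (e.injective h))).2.2.2 hij
  have h0 : ¬ k 0 := fun h => hK (hasKtt_of_half G t _ (by omega) _ _ hai hai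
    fun i j hij => by rw [← hc i j hij] at h; simpa [c] using h)
  have h1 : ¬ k 1 := fun h => hK (hasKtt_of_half G t _ (by omega) _ _ hai hbi
    fun i j hij => by rw [← hc i j hij] at h; simpa [c] using h)
  have h2 : ¬ k 2 := fun h => hK (hasKtt_of_half G t _ (by omega) _ _ hbi hai
    fun i j hij => by rw [← hc i j hij] at h; simpa [c] using h)
  have h3 : ¬ k 3 := fun h => hK (hasKtt_of_half G t _ (by omega) _ _ hbi hbi
    fun i j hij => by rw [← hc i j hij] at h; simpa [c] using h)
  have key : ∀ i j, i < j → ¬ G.Adj (a (e i)) (a (e j)) ∧ ¬ G.Adj (a (e i)) (b (e j)) ∧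
      ¬ G.Adj (b (e i)) (a (e j)) ∧ ¬ G.Adj (b (e i)) (b (e j)) := by
    intro i j hij
    rw [← hc i j hij] at h0 h1 h2 h3
    exact ⟨by simpa [c] using h0, by simpa [c] using h1, by simpa [c] using h2,
      by simpa [c] using h3⟩
  refine ⟨e, fun i => hab _, fun i j hij => ?_⟩
  obtain ⟨d1, d2, d3, d4⟩ := hd (e i) (e j) (fun h => hij (e.injective h))
  refine ⟨d1, d2, d3, d4, ?_⟩
  simp only [Function.comp]
  rcases lt_or_gt_of_ne hij with h | h
  · exact key i j h
  · obtain ⟨k1, k2, k3, k4⟩ := key j i h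
    exact ⟨fun h => k1 h.symm, fun h => k3 h.symm, fun h => k2 h.symm, fun h => k4 h.symm⟩

lemma exists_cover {V : Type} [Fintype V] (G : SimpleGraph V) (μ t : ℕ) (hK : ¬ HasKtt G t)
    (X : Set V)
    (hX : ∀ (n : ℕ) (a b : Fin n → V),
      IsIndMatching G a b → (∀ i, a i ∈ X ∨ b i ∈ X) → n ≤ μ) :
    ∃ C : Finset V, C.card ≤ 2 * matchBound μ t ∧
      ∀ u ∈ X, ∀ v, G.Adj u v → u ∈ C ∨ v ∈ C := by
  classical
  let P : Finset (V × V) → Prop := fun M => (∀ p ∈ M, G.Adj p.1 p.2 ∧ p.1 ∈ X) ∧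
    ∀ p ∈ M, ∀ q ∈ M, p ≠ q → p.1 ≠ q.1 ∧ p.1 ≠ q.2 ∧ p.2 ≠ q.1 ∧ p.2 ≠ q.2
  obtain ⟨M, hM, hmax⟩ := Finset.exists_max_image (Finset.univ.filter P) Finset.card
    ⟨∅, by simp [P]⟩
  simp only [Finset.mem_filter, Finset.mem_univ, true_and] at hM hmax
  have hcard : M.card ≤ matchBound μ t := by
    by_contra hlt
    push Not at hlt
    let f := M.equivFin.symm
    obtain ⟨e, he⟩ := induced_of_matching G μ t M.card hlt.le hK
      (fun i => (f i).1.1) (fun i => (f i).1.2) (fun i => (hM.1 _ (f i).2).1)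
      (fun i j hij => hM.2 _ (f i).2 _ (f j).2 (fun h => hij (f.injective (Subtype.ext h))))
    have := hX _ _ _ he (fun i => Or.inl (hM.1 _ (f (e i)).2).2)
    omega
  refine ⟨M.image Prod.fst ∪ M.image Prod.snd, ?_, ?_⟩
  · have h1 := Finset.card_union_le (M.image Prod.fst) (M.image Prod.snd)
    have h2 : (M.image Prod.fst).card ≤ _ := Finset.card_image_le
    have h3 : (M.image Prod.snd).card ≤ _ := Finset.card_image_le
    omega
  · intro u hu v huv
    by_contra hcon
    push Not at hcon
    have hu1 : ∀ p ∈ M, p.1 ≠ u ∧ p.2 ≠ u ∧ p.1 ≠ v ∧ p.2 ≠ v := by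
      intro p hp
      refine ⟨?_, ?_, ?_, ?_⟩ <;> rintro rfl
      · exact hcon.1 (Finset.mem_union_left _ (Finset.mem_image_of_mem _ hp))
      · exact hcon.1 (Finset.mem_union_right _ (Finset.mem_image_of_mem _ hp))
      · exact hcon.2 (Finset.mem_union_left _ (Finset.mem_image_of_mem _ hp))
      · exact hcon.2 (Finset.mem_union_right _ (Finset.mem_image_of_mem _ hp))
    have hnot : (u, v) ∉ M := fun h => (hu1 _ h).1 rfl
    have hP : P (insert (u, v) M) := by
      refine ⟨?_, ?_⟩
      · intro p hp
        rcases Finset.mem_insert.1 hp with rfl | hp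
        · exact ⟨huv, hu⟩
        · exact hM.1 p hp
      · intro p hp q hq hpq
        rcases Finset.mem_insert.1 hp with rfl | hp
        · rcases Finset.mem_insert.1 hq with rfl | hq
          · exact absurd rfl hpq
          · obtain ⟨k1, k2, k3, k4⟩ := hu1 q hq
            exact ⟨k1.symm, k2.symm, k3.symm, k4.symm⟩
        · rcases Finset.mem_insert.1 hq with rfl | hq
          · obtain ⟨k1, k2, k3, k4⟩ := hu1 p hp
            exact ⟨k1, k3, k2, k4⟩
          · exact hM.2 p hp q hq hpq
    have := hmax _ hP
    rw [Finset.card_insert_of_notMem hnot] at this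
    omega

/-- Attach a pendant vertex for every `w : W` at the node `g w`. -/
def pend {ι W : Type} (T : SimpleGraph ι) (g : W → ι) : SimpleGraph (ι ⊕ W) where
  Adj
    | .inl x, .inl y => T.Adj x y
    | .inl x, .inr w => x = g w
    | .inr w, .inl x => x = g w
    | .inr _, .inr _ => False
  symm := ⟨by
    rintro (x | w) (y | w') h
    · exact T.symm.symm _ _ h
    · exact h
    · exact h
    · exact h⟩
  loopless := ⟨by
    rintro (x | w) h
    · exact T.loopless.irrefl x h
    · exact h⟩

lemma pend_induce_conn {ι W : Type} (T : SimpleGraph ι) (g : W → ι) (A : Set ι)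
    (h : (T.induce A).Connected) : ((pend T g).induce (Sum.inl '' A)).Connected := by
  let f : T.induce A →g (pend T g).induce (Sum.inl '' A) :=
    ⟨fun x => ⟨Sum.inl x.1, x.1, x.2, rfl⟩, fun {x y} hxy => hxy⟩
  refine SimpleGraph.Connected.map f ?_ h
  rintro ⟨_, x, hx, rfl⟩
  exact ⟨⟨x, hx⟩, rfl⟩

lemma pend_isTree {ι W : Type} [Finite ι] [Finite W] (T : SimpleGraph ι) (hT : T.IsTree)
    (g : W → ι) : (pend T g).IsTree := by
  have hconn : (pend T g).Connected := by
    obtain ⟨x0⟩ := hT.connected.nonempty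
    rw [connected_iff_exists_forall_reachable]
    refine ⟨Sum.inl x0, ?_⟩
    let f : T →g pend T g := ⟨Sum.inl, fun {x y} h => h⟩
    have hr : ∀ x, (pend T g).Reachable (Sum.inl x0) (Sum.inl x) := fun x =>
      (hT.connected.preconnected x0 x).map f
    rintro (x | w)
    · exact hr x
    · refine (hr (g w)).trans (SimpleGraph.Adj.reachable ?_)
      show g w = g w
      rfl
  rw [isTree_iff_connected_and_card]
  refine ⟨hconn, le_antisymm ?_ hconn.card_vert_le_card_edgeSet_add_one⟩
  have hT' := (isTree_iff_connected_and_card.1 hT).2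
  have hsub : (pend T g).edgeSet ⊆ (Sym2.map Sum.inl '' T.edgeSet) ∪
      Set.range (fun w => s(Sum.inl (g w), Sum.inr w)) := by
    intro e
    induction e using Sym2.ind with
    | _ p q =>
      rcases p with x | w <;> rcases q with y | w' <;> intro h
      · exact Or.inl ⟨s(x, y), h, rfl⟩
      · have h' : x = g w' := h
        subst h'
        exact Or.inr ⟨w', rfl⟩
      · have h' : y = g w := h
        subst h'
        exact Or.inr ⟨w, Sym2.eq_swap⟩
      · exact absurd h (fun h => h)
  have h1 := Set.ncard_le_ncard hsub (Set.toFinite _)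
  have h2 := Set.ncard_union_le (Sym2.map Sum.inl '' T.edgeSet)
      (Set.range (fun w : W => (s(Sum.inl (g w), Sum.inr w) : Sym2 (ι ⊕ W))))
  have h3 := Set.ncard_image_le (f := Sym2.map (Sum.inl : ι → ι ⊕ W)) (Set.toFinite T.edgeSet)
  have h4 : (Set.range (fun w : W => (s(Sum.inl (g w), Sum.inr w) : Sym2 (ι ⊕ W)))).ncard
      ≤ Nat.card W := by
    rw [← Set.image_univ, ← Set.ncard_univ]
    exact Set.ncard_image_le (Set.toFinite _)
  rw [Nat.card_sum]
  rw [Nat.card_coe_set_eq] at hT' ⊢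
  omega

/-- The modified decomposition: `I` is an independent set of vertices to be moved to leaves. -/
lemma exists_td {V : Type} [Fintype V] (G : SimpleGraph V) (td : TreeDecomp G) (I : Set V)
    (hI : ∀ u ∈ I, ∀ v ∈ I, ¬ G.Adj u v) :
    ∃ td' : TreeDecomp G, ∀ y : td'.ι,
      (∃ x, td'.bag y = {u | (u ∈ td.bag x ∧ u ∉ I) ∨ ∃ w ∈ I, w ∈ td.bag x ∧ G.Adj w u}) ∨
      (∃ w ∈ I, td'.bag y = {u | u = w ∨ G.Adj w u}) := by
  classical
  haveI := td.fintype_ι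
  choose g0 hg0 using td.mem_bag
  let g : I → td.ι := fun w => g0 w
  let bag : td.ι ⊕ I → Set V := Sum.elim
    (fun x => {u | (u ∈ td.bag x ∧ u ∉ I) ∨ ∃ w ∈ I, w ∈ td.bag x ∧ G.Adj w u})
    (fun w => {u | u = w.1 ∨ G.Adj w.1 u})
  refine ⟨⟨td.ι ⊕ I, inferInstance, pend td.T g, pend_isTree _ td.isTree g, bag, ?_, ?_, ?_⟩, ?_⟩
  · intro v
    by_cases hv : v ∈ I
    · exact ⟨Sum.inr ⟨v, hv⟩, Or.inl rfl⟩
    · exact ⟨Sum.inl (g0 v), Or.inl ⟨hg0 v, hv⟩⟩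
  · intro u v huv
    by_cases hu : u ∈ I
    · exact ⟨Sum.inr ⟨u, hu⟩, Or.inl rfl, Or.inr huv⟩
    by_cases hv : v ∈ I
    · exact ⟨Sum.inr ⟨v, hv⟩, Or.inr huv.symm, Or.inl rfl⟩
    obtain ⟨x, hx, hx'⟩ := td.edge_bag huv
    exact ⟨Sum.inl x, Or.inl ⟨hx, hu⟩, Or.inl ⟨hx', hv⟩⟩
  · intro u
    by_cases hu : u ∈ I
    · have : {y | u ∈ bag y} = {Sum.inr ⟨u, hu⟩} := by
        ext y
        rcases y with x | w
        · simp only [bag, Set.mem_ofPred_eq, Sum.elim_inl, Set.mem_singleton_iff, reduceCtorEq,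
            iff_false]
          rintro (h | ⟨w, hw, -, h⟩)
          · exact h.2 hu
          · exact hI w hw u hu h
        · simp only [bag, Set.mem_ofPred_eq, Sum.elim_inr, Set.mem_singleton_iff, Sum.inr.injEq]
          constructor
          · rintro (h | h)
            · exact Subtype.ext h.symm
            · exact absurd h (hI _ w.2 u hu)
          · rintro rfl
            exact Or.inl rfl
      rw [this]
      have : Subsingleton ({Sum.inr ⟨u, hu⟩} : Set (td.ι ⊕ I)) := inferInstance
      exact (IsTree.of_subsingleton).connected
    · have hsub1 : Sum.inl '' {x | u ∈ td.bag x} ⊆ {y | u ∈ bag y} := by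
        rintro _ ⟨x, hx, rfl⟩
        exact Or.inl ⟨hx, hu⟩
      have hsub2 : ∀ w ∈ I, G.Adj w u → Sum.inl '' {x | w ∈ td.bag x} ⊆ {y | u ∈ bag y} := by
        rintro w hw hwu _ ⟨x, hx, rfl⟩
        exact Or.inr ⟨w, hw, hx, hwu⟩
      have hU : ∀ w, G.Adj w u → ((pend td.T g).induce
          (Sum.inl '' {x | u ∈ td.bag x} ∪ Sum.inl '' {x | w ∈ td.bag x})).Connected := by
        intro w hwu
        obtain ⟨z, hz, hz'⟩ := td.edge_bag hwu
        exact induce_union_connected (pend_induce_conn _ g _ (td.bag_conn u)).preconnected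
          (pend_induce_conn _ g _ (td.bag_conn w)).preconnected
          ⟨Sum.inl z, ⟨z, hz', rfl⟩, ⟨z, hz, rfl⟩⟩
      have hx0 : Sum.inl (g0 u) ∈ (Sum.inl '' {x | u ∈ td.bag x} : Set (td.ι ⊕ I)) :=
        ⟨_, hg0 u, rfl⟩
      refine induce_connected_of_patches (Sum.inl (g0 u)) (hsub1 hx0) ?_
      rintro (x | w) hv
      · rcases hv with h | ⟨w, hw, hwx, hwu⟩
        · exact ⟨_, hsub1, hx0, ⟨x, h.1, rfl⟩,
            (pend_induce_conn _ g _ (td.bag_conn u)).preconnected _ _⟩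
        · exact ⟨_, Set.union_subset hsub1 (hsub2 w hw hwu), Or.inl hx0, Or.inr ⟨x, hwx, rfl⟩,
            (hU w hwu).preconnected _ _⟩
      · rcases hv with h | hwu
        · exact absurd w.2 (h ▸ hu)
        · have hadj : (pend td.T g).Adj (Sum.inl (g w)) (Sum.inr w) := by
            show g w = g w
            rfl
          refine ⟨_ ∪ {Sum.inl (g w), Sum.inr w}, Set.union_subset
            (Set.union_subset hsub1 (hsub2 w w.2 hwu)) ?_, Or.inl (Or.inl hx0),
            Or.inr (by simp), (induce_union_connected (hU w hwu).preconnected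
              (induce_pair_connected_of_adj hadj).preconnected ?_).preconnected _ _⟩
          · rintro y (rfl | rfl)
            · exact hsub2 w w.2 hwu ⟨_, hg0 w, rfl⟩
            · exact Or.inr hwu
          · exact ⟨Sum.inl (g w), Or.inr ⟨_, hg0 w, rfl⟩, by simp⟩
  · rintro (x | w)
    · exact Or.inl ⟨x, rfl⟩
    · exact Or.inr ⟨w.1, w.2, rfl⟩

lemma exists_mu {V : Type} [Fintype V] (G : SimpleGraph V) :
    {n | ∃ td : TreeDecomp G, td.MuLE n}.Nonempty := by
  refine ⟨Fintype.card V, ⟨Unit, inferInstance, ⊥, IsTree.of_subsingleton, fun _ => Set.univ,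
    fun v => ⟨(), trivial⟩, fun u v _ => ⟨(), trivial, trivial⟩, fun v => ?_⟩, ?_⟩
  · have : Nonempty {x : Unit | v ∈ (fun _ => Set.univ : Unit → Set V) x} := ⟨⟨(), trivial⟩⟩
    exact (IsTree.of_subsingleton).connected
  · intro x n a b h _
    have : Function.Injective a := by
      intro i j hij
      by_contra hne
      exact (h.2 i j hne).1 hij
    simpa using Fintype.card_le_of_injective a this

/-- For all positive `μ` and `t` there exists `K'` such that every finite graph with
induced matching treewidth at most `μ` and with no `K_{t,t}` subgraph (not necessarily
induced) has treewidth strictly less than `K'`. -/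
theorem stmt17 (μ t : ℕ) (hμ : 0 < μ) (ht : 0 < t) :
    ∃ K' : ℕ, ∀ (V : Type) [Fintype V] (G : SimpleGraph V),
      treeMu G ≤ μ →
      (¬ ∃ X Y : Finset V, Disjoint X Y ∧ X.card = t ∧ Y.card = t ∧
        ∀ x ∈ X, ∀ y ∈ Y, G.Adj x y) →
      treewidth G < K' := by
  classical
  set d := 2 * matchBound μ t with hd
  refine ⟨d + d * d + 1, fun V _ G hmu hK => ?_⟩
  obtain ⟨td, htd⟩ := Nat.sInf_mem (exists_mu G)
  have htd' : td.MuLE μ := fun x n a b h h' => (htd x n a b h h').trans hmu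
  choose C hC hcov using fun x => exists_cover G μ t hK (td.bag x) (htd' x)
  let low : V → Prop := fun v => (G.neighborFinset v).card ≤ d
  let I : Set V := {v | low v ∧ ∀ w, G.Adj v w → ¬ low w}
  have hI : ∀ u ∈ I, ∀ v ∈ I, ¬ G.Adj u v := fun u hu v hv h => hu.2 v h hv.1
  obtain ⟨td', hbag⟩ := exists_td G td I hI
  have hw : td'.WidthLE (d + d * d) := by
    intro y
    rcases hbag y with ⟨x, hx⟩ | ⟨w, hw, hx⟩
    · rw [hx]
      have hlow : ∀ u ∈ td.bag x, u ∉ C x → low u := by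
        intro u hu huC
        refine (Finset.card_le_card ?_).trans (hC x)
        intro v hv
        exact (hcov x u hu v (by simpa using hv)).resolve_left huC
      let B : Finset V := C x ∪ ((C x).filter low).biUnion (fun c => G.neighborFinset c)
      have hB : B.card ≤ d + d * d := by
        refine (Finset.card_union_le _ _).trans (Nat.add_le_add (hC x) ?_)
        refine (Finset.card_biUnion_le_card_mul _ _ d ?_).trans ?_
        · intro c hc
          exact (Finset.mem_filter.1 hc).2
        · exact Nat.mul_le_mul_right _ ((Finset.card_filter_le _ _).trans (hC x))
      have hsub : {u | (u ∈ td.bag x ∧ u ∉ I) ∨ ∃ w ∈ I, w ∈ td.bag x ∧ G.Adj w u} ⊆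
          (B : Set V) := by
        rintro u (⟨hu, huI⟩ | ⟨w, hwI, hwx, hwu⟩)
        · by_cases huC : u ∈ C x
          · exact Finset.mem_coe.2 (Finset.mem_union_left _ huC)
          · have hlu := hlow u hu huC
            have : ∃ w, G.Adj u w ∧ low w := by
              by_contra hcon
              push Not at hcon
              exact huI ⟨hlu, hcon⟩
            obtain ⟨w, huw, hwl⟩ := this
            refine Finset.mem_coe.2 (Finset.mem_union_right _ (Finset.mem_biUnion.2 ⟨w, ?_, ?_⟩))
            · exact Finset.mem_filter.2 ⟨(hcov x u hu w huw).resolve_left huC, hwl⟩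
            · simpa using huw.symm
        · rcases hcov x w hwx u hwu with h | h
          · refine Finset.mem_coe.2 (Finset.mem_union_right _ (Finset.mem_biUnion.2 ⟨w, ?_, ?_⟩))
            · exact Finset.mem_filter.2 ⟨h, hwI.1⟩
            · simpa using hwu
          · exact Finset.mem_coe.2 (Finset.mem_union_left _ h)
      have := Set.ncard_le_ncard hsub (Finset.finite_toSet B)
      rw [Set.ncard_coe_finset] at this
      omega
    · rw [hx]
      have hsub : {u | u = w ∨ G.Adj w u} ⊆ ((insert w (G.neighborFinset w) : Finset V) : Set V) := by
        rintro u (rfl | h)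
        · simp
        · simp [h]
      have h1 := Set.ncard_le_ncard hsub (Finset.finite_toSet _)
      rw [Set.ncard_coe_finset] at h1
      have h2 := Finset.card_insert_le w (G.neighborFinset w)
      have h3 : (G.neighborFinset w).card ≤ d := hw.1
      have : 0 ≤ d * d := Nat.zero_le _
      omega
  have : treewidth G ≤ d + d * d := Nat.sInf_le ⟨td', hw⟩
  omega
end
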